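/- For every m ≥ 1, PA⁻ + IΣ₁ proves that fairFRT^1(Σm) implies GPHP(Σm). -/

import Mathlib

/- Shared development: first-order arithmetic in the language {0,1,+,·,<},
   the arithmetic hierarchy, fragments of arithmetic, and coded finite
   combinatorics inside models. -/

open FirstOrder Language

namespace ArithFC

/-- Function symbols of the language of arithmetic: 0, 1, +, ·. -/
inductive Func : ℕ → Type
  | zero : Func 0
  | one : Func 0
  | add : Func 2
  | mul : Func 2

/-- Relation symbols of the language of arithmetic: <. -/
inductive Rel : ℕ → Type
  | lt : Rel 2

/-- The first-order language {0, 1, +, ·, <}. -/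
def lang : Language :=
  { Functions := Func, Relations := Rel }

section Instances

variable (M : Type) [lang.Structure M]

instance : Zero M := ⟨Structure.funMap (L := lang) Func.zero ![]⟩
instance : One M := ⟨Structure.funMap (L := lang) Func.one ![]⟩
instance : Add M := ⟨fun x y => Structure.funMap (L := lang) Func.add ![x, y]⟩
instance : Mul M := ⟨fun x y => Structure.funMap (L := lang) Func.mul ![x, y]⟩
instance : LT M := ⟨fun x y => Structure.RelMap (L := lang) Rel.lt ![x, y]⟩
instance : LE M := ⟨fun x y => x < y ∨ x = y⟩

end Instances

/-- The numeral `n` in a model. -/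
def numM (M : Type) [lang.Structure M] : ℕ → M
  | 0 => 0
  | n + 1 => numM M n + 1

/-- `b` is nonstandard (greater than every numeral). -/
def Nonstd {M : Type} [lang.Structure M] (b : M) : Prop := ∀ n : ℕ, numM M n < b

/-- The atomic formula `t < u`. -/
def ltFm {α : Type} {n : ℕ} (t u : lang.Term (α ⊕ Fin n)) : lang.BoundedFormula α n :=
  BoundedFormula.rel (Rel.lt : lang.Relations 2) ![t, u]

/-- Δ₀ formulas: built from atomic formulas by boolean connectives and
bounded universal quantification (this generates, up to logical equivalence,
the usual class of bounded formulas). -/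
inductive IsDelta0 {α : Type} : ∀ n : ℕ, lang.BoundedFormula α n → Prop
  | falsum (n : ℕ) : IsDelta0 n BoundedFormula.falsum
  | equal (n : ℕ) (t u : lang.Term (α ⊕ Fin n)) : IsDelta0 n (BoundedFormula.equal t u)
  | rel (n l : ℕ) (R : lang.Relations l) (ts : Fin l → lang.Term (α ⊕ Fin n)) :
      IsDelta0 n (BoundedFormula.rel R ts)
  | imp (n : ℕ) {φ ψ : lang.BoundedFormula α n} :
      IsDelta0 n φ → IsDelta0 n ψ → IsDelta0 n (φ.imp ψ)
  | bdAll (n : ℕ) (t : lang.Term (α ⊕ Fin n)) {φ : lang.BoundedFormula α (n + 1)} :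
      IsDelta0 (n + 1) φ →
      IsDelta0 n
        (BoundedFormula.all ((ltFm (Term.var (Sum.inr (Fin.last n))) (t.liftAt 1 n)).imp φ))

mutual
  /-- Σ_m formulas. -/
  inductive SigmaFm {α : Type} : ℕ → ∀ n : ℕ, lang.BoundedFormula α n → Prop
    | delta0 (m n : ℕ) {φ : lang.BoundedFormula α n} : IsDelta0 n φ → SigmaFm m n φ
    | ofPi (m n : ℕ) {φ : lang.BoundedFormula α n} : PiFm m n φ → SigmaFm (m + 1) n φ
    | ex (m n : ℕ) {φ : lang.BoundedFormula α (n + 1)} :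
        SigmaFm (m + 1) (n + 1) φ → SigmaFm (m + 1) n φ.ex
  /-- Π_m formulas. -/
  inductive PiFm {α : Type} : ℕ → ∀ n : ℕ, lang.BoundedFormula α n → Prop
    | delta0 (m n : ℕ) {φ : lang.BoundedFormula α n} : IsDelta0 n φ → PiFm m n φ
    | ofSigma (m n : ℕ) {φ : lang.BoundedFormula α n} : SigmaFm m n φ → PiFm (m + 1) n φ
    | all (m n : ℕ) {φ : lang.BoundedFormula α (n + 1)} :
        PiFm (m + 1) (n + 1) φ → PiFm (m + 1) n φ.all
end

/-- A `k`-ary relation on `M` is Σ_m-definable (with parameters from `M`). -/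
def IsSigmaDef (m : ℕ) (M : Type) [lang.Structure M] {k : ℕ} (R : (Fin k → M) → Prop) : Prop :=
  ∃ (p : ℕ) (φ : lang.BoundedFormula (Fin k ⊕ Fin p) 0) (w : Fin p → M),
    SigmaFm m 0 φ ∧ ∀ v : Fin k → M, R v ↔ φ.Realize (Sum.elim v w) finZeroElim

/-- A subset of `M` is Σ_m-definable with parameters. -/
def SigmaDef1 (m : ℕ) (M : Type) [lang.Structure M] (A : Set M) : Prop :=
  IsSigmaDef m M (k := 1) fun v => v 0 ∈ A

/-- A binary relation on `M` is Σ_m-definable with parameters. -/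
def SigmaDef2 (m : ℕ) (M : Type) [lang.Structure M] (R : M → M → Prop) : Prop :=
  IsSigmaDef m M (k := 2) fun v => R (v 0) (v 1)

/-- A ternary relation on `M` is Σ_m-definable with parameters. -/
def SigmaDef3 (m : ℕ) (M : Type) [lang.Structure M] (R : M → M → M → Prop) : Prop :=
  IsSigmaDef m M (k := 3) fun v => R (v 0) (v 1) (v 2)

/-- `M` is a model of PA⁻ (the nonnegative part of a discretely ordered
commutative semiring). -/
structure PAm (M : Type) [lang.Structure M] : Prop where
  add_assoc : ∀ x y z : M, x + y + z = x + (y + z)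
  add_comm : ∀ x y : M, x + y = y + x
  mul_assoc : ∀ x y z : M, x * y * z = x * (y * z)
  mul_comm : ∀ x y : M, x * y = y * x
  ldistrib : ∀ x y z : M, x * (y + z) = x * y + x * z
  add_zero : ∀ x : M, x + 0 = x
  mul_zero : ∀ x : M, x * 0 = 0
  mul_one : ∀ x : M, x * 1 = x
  lt_trans : ∀ x y z : M, x < y → y < z → x < z
  lt_irrefl : ∀ x : M, ¬x < x
  lt_total : ∀ x y : M, x < y ∨ x = y ∨ y < x
  add_lt_add : ∀ x y z : M, x < y → x + z < y + z
  mul_lt_mul : ∀ x y z : M, x < y → 0 < z → x * z < y * z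
  sub_exists : ∀ x y : M, x < y → ∃ z, x + z = y
  zero_lt_one : (0 : M) < 1
  discrete : ∀ x : M, 0 < x → (1 : M) ≤ x
  zero_le : ∀ x : M, (0 : M) ≤ x

/-- `M` satisfies the Σ_m-induction scheme (with parameters). -/
def ISig (m : ℕ) (M : Type) [lang.Structure M] : Prop :=
  ∀ A : Set M, SigmaDef1 m M A → (0 : M) ∈ A → (∀ x, x ∈ A → x + 1 ∈ A) → ∀ x, x ∈ A

/-- `M` satisfies the Σ_m-collection (bounding) scheme (with parameters). -/
def BSig (m : ℕ) (M : Type) [lang.Structure M] : Prop :=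
  ∀ R : M → M → Prop, SigmaDef2 m M R → ∀ a : M,
    (∀ x, x < a → ∃ y, R x y) → ∃ b, ∀ x, x < a → ∃ y, y < b ∧ R x y

section Coding

variable {M : Type} [lang.Structure M]

/-- `z` is the Cantor pair `⟨x, y⟩`: `2z = (x+y)(x+y+1) + 2y`. -/
def IsPairC (z x y : M) : Prop := z + z = (x + y) * (x + y + 1) + (y + y)

/-- Gödel's β-function: `x = a mod ((i+1)·b + 1)`. -/
def BetaC (a b i x : M) : Prop :=
  x < (i + 1) * b + 1 ∧ ∃ q, a = q * ((i + 1) * b + 1) + x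

/-- The sequence coded by `s` (via a Cantor pair of β-function data) has value `x`
at place `i`. -/
def SeqAt (s i x : M) : Prop := ∃ a b, IsPairC s a b ∧ BetaC a b i x

/-- `c` codes the M-finite set `X` of cardinality `card`: `c = ⟨card, s⟩` where `s`
codes the strictly increasing enumeration of `X` of length `card`. -/
def CodesFinset (c : M) (X : Set M) (card : M) : Prop :=
  ∃ s, IsPairC c card s ∧
    (∀ i, i < card → ∃ x, x ∈ X ∧ SeqAt s i x) ∧
    (∀ i j x y, i < j → j < card → SeqAt s i x → SeqAt s j y → x < y) ∧
    (∀ x, x ∈ X ↔ ∃ i, i < card ∧ SeqAt s i x)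

/-- `X` is an M-finite (coded) set. -/
def MFinite (X : Set M) : Prop := ∃ c card : M, CodesFinset c X card

/-- `d` codes an `e`-element subset `D` of `[0, y)`, i.e. an element of `[y]^e`. -/
def CodesTupleIn (d e y : M) (D : Set M) : Prop :=
  CodesFinset d D e ∧ ∀ z ∈ D, z < y

/-- `f` codes a (finite) function defined on all of `[0, a)`. -/
def CodesFunOn (f a : M) : Prop :=
  ∀ x, x < a → (∃ y, SeqAt f x y) ∧ ∀ y y', SeqAt f x y → SeqAt f x y' → y = y'

/-- `X` is an M-coded subset of `[0, a)`. -/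
def MCodedSubset (a : M) (X : Set M) : Prop :=
  MFinite X ∧ ∀ x ∈ X, x < a

end Coding

/-- An `M`-ultrafilter on `a`: an ultrafilter of the Boolean algebra of
M-finite subsets of `[0, a)`. -/
structure MUltra (M : Type) [lang.Structure M] (a : M) where
  sets : Set (Set M)
  mem_coded : ∀ X ∈ sets, MCodedSubset a X
  univ_mem : {x : M | x < a} ∈ sets
  superset_mem : ∀ X Y : Set M, X ∈ sets → MCodedSubset a Y → X ⊆ Y → Y ∈ sets
  inter_mem : ∀ X Y : Set M, X ∈ sets → Y ∈ sets → X ∩ Y ∈ sets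
  empty_not_mem : (∅ : Set M) ∉ sets
  ultra : ∀ X : Set M, MCodedSubset a X → X ∈ sets ∨ {x : M | x < a ∧ x ∉ X} ∈ sets

section Principles

variable (M : Type) [lang.Structure M]

/-- `F` is (the graph of) a Σ_m-definable injection from `[0, y)` into `[0, x)`. -/
def SigmaInjRel (m : ℕ) (F : M → M → Prop) (y x : M) : Prop :=
  SigmaDef2 m M F ∧
    (∀ u, u < y → ∃ v, v < x ∧ F u v) ∧
    (∀ u v v', u < y → F u v → F u v' → v = v') ∧
    (∀ u u' v, u < y → u' < y → F u v → F u' v → u = u')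

/-- There exists a Σ_m-definable injection from `[0, y)` into `[0, x)`. -/
def ExSigmaInj (m : ℕ) (y x : M) : Prop := ∃ F : M → M → Prop, SigmaInjRel M m F y x

/-- There exists a Σ_m-definable injection from all of `M` into `[0, a)`. -/
def SigmaInjWhole (m : ℕ) (a : M) : Prop :=
  ∃ F : M → M → Prop, SigmaDef2 m M F ∧
    (∀ u, ∃ v, v < a ∧ F u v) ∧
    (∀ u v v', F u v → F u v' → v = v') ∧
    (∀ u u' v, F u v → F u' v → u = u')

/-- CARD(Σ_m): no Σ_m-definable multivalued map sends `M` injectively below `a`. -/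
def CARD (m : ℕ) : Prop :=
  ∀ F : M → M → Prop, SigmaDef2 m M F → ∀ a : M,
    (∀ x, ∃ y, y < a ∧ F x y) →
      ∃ x0 x1 y, x0 ≠ x1 ∧ y < a ∧ F x0 y ∧ F x1 y

/-- GPHP(Σ_m): for every `x` there is `y` with no Σ_m-definable injection of
`[0,y)` into `[0,x)`. -/
def GPHP (m : ℕ) : Prop := ∀ x : M, ∃ y : M, ¬ExSigmaInj M m y x

/-- WPHP(Σ_m): for `x > 0` there is no Σ_m-definable injection of `[0,2x)` into `[0,x)`. -/
def WPHP (m : ℕ) : Prop := ∀ x : M, 0 < x → ¬ExSigmaInj M m (x + x) x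

/-- `C` is a Σ_m-definable `k`-coloring of `[y]^e` (acting on codes of
`e`-element subsets of `[0,y)`, independently of the chosen code). -/
def IsColoring (m : ℕ) (e y k : M) (C : M → M → Prop) : Prop :=
  SigmaDef2 m M C ∧
    (∀ d D, CodesTupleIn d e y D → ∃ i, i < k ∧ C d i) ∧
    (∀ d d' D i i', CodesTupleIn d e y D → CodesTupleIn d' e y D → C d i → C d' i' → i = i')

/-- FRT^e_k(Σ_m): every Σ_m-definable `k`-coloring of some `[y]^e` has an
M-finite homogeneous set of cardinality `x`, for every `x`. -/
def FRT (m : ℕ) (e k : M) : Prop :=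
  ∀ x : M, ∃ y : M, ∀ C : M → M → Prop, IsColoring M m e y k C →
    ∃ (c : M) (H : Set M), CodesFinset c H x ∧ (∀ z ∈ H, z < y) ∧
      ∃ i, ∀ d D, CodesFinset d D e → D ⊆ H → C d i

/-- fairFRT^e_k(Σ_m): the homogeneous set is required to be given as the range of a
Σ_m-definable injection from `[0,x)` into `[0,y)`. -/
def FairFRT (m : ℕ) (e k : M) : Prop :=
  ∀ x : M, ∃ y : M, ∀ C : M → M → Prop, IsColoring M m e y k C →
    ∃ H : M → M → Prop, SigmaInjRel M m H x y ∧
      ∃ i, ∀ d D, CodesFinset d D e → (∀ z ∈ D, ∃ u, u < x ∧ H u z) → C d i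

/-- `C` is a Σ_m-definable `k`-coloring of `[0, y)`. -/
def IsColoring1 (m : ℕ) (y k : M) (C : M → M → Prop) : Prop :=
  SigmaDef2 m M C ∧
    (∀ z, z < y → ∃ i, i < k ∧ C z i) ∧
    (∀ z i i', z < y → C z i → C z i' → i = i')

/-- FRT¹_k(Σ_m): every Σ_m-definable `k`-coloring of some `[0,y)` has an M-finite
homogeneous set of cardinality `x`, for every `x`. -/
def FRT1 (m : ℕ) (k : M) : Prop :=
  ∀ x : M, ∃ y : M, ∀ C : M → M → Prop, IsColoring1 M m y k C →
    ∃ (c : M) (H : Set M), CodesFinset c H x ∧ (∀ z ∈ H, z < y) ∧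
      ∃ i, ∀ z ∈ H, C z i

/-- fairFRT¹_k(Σ_m). -/
def FairFRT1 (m : ℕ) (k : M) : Prop :=
  ∀ x : M, ∃ y : M, ∀ C : M → M → Prop, IsColoring1 M m y k C →
    ∃ H : M → M → Prop, SigmaInjRel M m H x y ∧
      ∃ i, ∀ u v, u < x → H u v → C v i

end Principles

section Approx

variable {M : Type} [lang.Structure M]

/-- `f` is (the graph of) a partial function. -/
def IsPartialFun (f : M → M → Prop) : Prop := ∀ x y y', f x y → f x y' → y = y'

/-- `s` codes an approximation to the partial function `f` of length `b`. -/
def IsApprox (f : M → M → Prop) (s b : M) : Prop :=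
  (∀ i, i < b → ∃ v, SeqAt s i v) ∧
    (∀ i u v x y, i + 1 < b → SeqAt s i u → SeqAt s (i + 1) v → x ≤ u → f x y → y ≤ v)

/-- `s` codes a `g`-stretched approximation to the partial function `f` of length `b`. -/
def IsStretchedApprox (f g : M → M → Prop) (s b : M) : Prop :=
  (∀ i, i < b → ∃ v, SeqAt s i v) ∧
    (∀ i u w v x y, i + 1 < b → SeqAt s i u → g u w → SeqAt s (i + 1) v →
      x ≤ w → f x y → y ≤ v)

/-- The eventual (limit) value of `fun s => h s ·` is `x`. -/
def EvLim (h : M → M → Prop) (x : M) : Prop := ∃ s : M, ∀ t, s < t → h t x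

end Approx

/-- PΣ_m: every partial Σ_m-definable function admits approximations of every length. -/
def PSig (m : ℕ) (M : Type) [lang.Structure M] : Prop :=
  ∀ f : M → M → Prop, SigmaDef2 m M f → IsPartialFun f → ∀ b : M, ∃ s, IsApprox f s b

section Extensions

variable (M N : Type) [lang.Structure M] [lang.Structure N]

/-- `g : M → N` is Σ_m-elementary: Σ_m formulas with parameters from `M` transfer. -/
def SigmaElem (m : ℕ) (g : M → N) : Prop :=
  ∀ (p : ℕ) (φ : lang.BoundedFormula (Fin p) 0), SigmaFm m 0 φ →
    ∀ v : Fin p → M, (φ.Realize v finZeroElim ↔ φ.Realize (g ∘ v) finZeroElim)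

/-- The extension `g : M → N` is cofinal. -/
def Cofinal (g : M → N) : Prop := ∀ z : N, ∃ x : M, z ≤ g x

/-- `[0,a]^M = [0,a]^N`: every element of `N` below `g a` comes from `M`. -/
def SameBelow (g : M → N) (a : M) : Prop := ∀ z : N, z ≤ g a → ∃ x : M, g x = z

end Extensions

section Ramsey

variable {M : Type} [lang.Structure M]

/-- `f` is an M-coded `k`-coloring of `[y]^e` (assigning colors to codes of
`e`-subsets of `[0,y)`, independently of the code). -/
def CodedColoring (f e y k : M) : Prop :=
  (∀ d D, CodesTupleIn d e y D → ∃ i, i < k ∧ SeqAt f d i) ∧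
    (∀ d d' D i i', CodesTupleIn d e y D → CodesTupleIn d' e y D →
      SeqAt f d i → SeqAt f d' i' → i = i')

/-- The coded coloring `f` of `[y]^e` has an M-coded homogeneous set of cardinality `x`. -/
def CodedHomog (f e y x : M) : Prop :=
  ∃ (c : M) (H : Set M), CodesFinset c H x ∧ (∀ z ∈ H, z < y) ∧
    ∃ i, ∀ d D, CodesFinset d D e → D ⊆ H → SeqAt f d i

/-- `y = r(x, e, k)`: `y` is the least size guaranteeing coded homogeneous sets of
cardinality `x` for all coded `k`-colorings of `e`-subsets. -/
def IsRamsey (x e k y : M) : Prop :=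
  (∀ f, CodedColoring f e y k → CodedHomog f e y x) ∧
    (∀ y', y' < y → ∃ f, CodedColoring f e y' k ∧ ¬CodedHomog f e y' x)

/-- `y = r^(b)(x, e, k)`: the `b`-th iterate of the Ramsey function inside `M`. -/
def IterRamsey (x e k b y : M) : Prop :=
  ∃ s : M, SeqAt s 0 x ∧ SeqAt s b y ∧ (∀ i, i ≤ b → ∃ u, SeqAt s i u) ∧
    (∀ i u v, i < b → SeqAt s i u → SeqAt s (i + 1) v → IsRamsey u e k v)

end Ramsey

end ArithFC

namespace ArithFC

section FairRamseyToPigeonhole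

variable {M : Type} [lang.Structure M]

lemma PAm.not_lt_zero (hPA : PAm M) (x : M) : ¬x < 0 := by
  intro hx
  rcases hPA.zero_le x with h0x | rfl
  · exact hPA.lt_irrefl x (hPA.lt_trans x 0 x hx h0x)
  · exact hPA.lt_irrefl 0 hx

lemma PAm.one_lt_one_add_one (hPA : PAm M) : (1 : M) < 1 + 1 := by
  simpa only [hPA.add_comm 0 1, hPA.add_zero] using hPA.add_lt_add 0 1 1 hPA.zero_lt_one

lemma PAm.not_exSigmaInj_zero (hPA : PAm M) (m : ℕ) {y : M} (hy : 0 < y) :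
    ¬ExSigmaInj M m y 0 := by
  rintro ⟨F, -, hFtotal, -, -⟩
  obtain ⟨v, hv, -⟩ := hFtotal 0 hy
  exact hPA.not_lt_zero v hv

lemma SigmaInjRel.isColoring1 {m : ℕ} {F : M → M → Prop} {y k : M}
    (hF : SigmaInjRel M m F y k) : IsColoring1 M m y k F :=
  ⟨hF.1, hF.2.1, hF.2.2.1⟩

lemma SigmaInjRel.eq_of_homogeneous {m n : ℕ} {F H : M → M → Prop} {x y k i u u' : M}
    (hF : SigmaInjRel M m F y k) (hH : SigmaInjRel M n H x y)
    (hhom : ∀ u v, u < x → H u v → F v i) (hu : u < x) (hu' : u' < x) : u = u' := by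
  obtain ⟨-, -, -, hFinj⟩ := hF
  obtain ⟨-, hHtotal, -, hHinj⟩ := hH
  obtain ⟨v, hv, hHuv⟩ := hHtotal u hu
  obtain ⟨v', hv', hHuv'⟩ := hHtotal u' hu'
  have hvv' : v = v' := hFinj v v' i hv hv' (hhom u v hu hHuv) (hhom u' v' hu' hHuv')
  exact hHinj u u' v hu hu' hHuv (hvv' ▸ hHuv')

/-- An injection into `[0, k)`, read as a `k`-coloring, uses each color at most once, so it has no
homogeneous set of size two. -/
theorem FairFRT1.exists_not_exSigmaInj {m : ℕ} {k : M} (hPA : PAm M) (hk : FairFRT1 M m k) :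
    ∃ y, ¬ExSigmaInj M m y k := by
  obtain ⟨y, hy⟩ := hk (1 + 1)
  refine ⟨y, fun ⟨F, hF⟩ ↦ ?_⟩
  obtain ⟨H, hH, i, hhom⟩ := hy F hF.isColoring1
  have h01 : (0 : M) < 1 := hPA.zero_lt_one
  have h12 : (1 : M) < 1 + 1 := hPA.one_lt_one_add_one
  have h02 : (0 : M) < 1 + 1 := hPA.lt_trans _ _ _ h01 h12
  have h_zero_eq_one : (0 : M) = 1 := hF.eq_of_homogeneous hH hhom h02 h12
  exact hPA.lt_irrefl 1 (h_zero_eq_one ▸ h01)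

end FairRamseyToPigeonhole

theorem statement_4_general (m : ℕ) (M : Type) [lang.Structure M] (hPA : PAm M)
    (hFRT : ∀ k : M, (1 : M) ≤ k → FairFRT1 M m k) : GPHP M m := by
  intro x
  rcases hPA.zero_le x with hx | rfl
  · exact (hFRT x (hPA.discrete x hx)).exists_not_exSigmaInj hPA
  · exact ⟨1, hPA.not_exSigmaInj_zero m hPA.zero_lt_one⟩

/-- For every `m ≥ 1`, PA⁻ + IΣ₁ proves `fairFRT¹(Σm) → GPHP(Σm)`. -/
theorem statement_4 (m : ℕ) (hm : 1 ≤ m) (M : Type) [lang.Structure M]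
    (hPA : PAm M) (hI : ISig 1 M) :
    (∀ k : M, (1 : M) ≤ k → FairFRT1 M m k) → GPHP M m :=
  statement_4_general m M hPA

end ArithFC
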